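/- Let G = G(m,e,2) with e even, n = m/2. Then G has exactly 4d one-dimensional representations, namely χ((xy)^c), χ(A(xy)^c), χ(N⁺(xy)^c), χ(N⁻(xy)^c) for c = 0,…,d−1, where A = x^m − y^m, N⁺ = x^n + y^n, N⁻ = x^n − y^n; the character group is generated by χ(xy) of order d and χ(A), χ(N⁺) of order 2. Moreover G has exactly (n−1)d isomorphism classes of 2-dimensional irreducible representations, represented by ρ(x^a (xy)^b) with 0 < a < n and 0 ≤ b < d, and no irreducibles of dimension greater than 2. -/

import Mathlib

noncomputable section

variable {K : Type*} [Field K]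

/-- The diagonal matrix `D(a,b) = diag(ζ^a, ζ^b)` as an element of `GL₂(K)`. -/
def Dgl (ζ : K) (hζ0 : ζ ≠ 0) (a b : ℤ) : GL (Fin 2) K :=
  Matrix.GeneralLinearGroup.mkOfDetNeZero (Matrix.diagonal ![ζ ^ a, ζ ^ b]) (by
    simp only [Matrix.det_diagonal, Fin.prod_univ_two]
    simp only [Matrix.cons_val_zero, Matrix.cons_val_one, Matrix.head_cons]
    exact mul_ne_zero (zpow_ne_zero _ hζ0) (zpow_ne_zero _ hζ0))

/-- The permutation matrix `τ` swapping the two coordinates, as an element of `GL₂(K)`. -/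
def tauGL (K : Type*) [Field K] : GL (Fin 2) K :=
  Matrix.GeneralLinearGroup.mkOfDetNeZero !![(0 : K), 1; 1, 0] (by
    norm_num [Matrix.det_fin_two_of])

/-- The imprimitive reflection group `G(m,e,2) ≤ GL₂(K)`, generated by the diagonal
matrices `D(a,b)` with `a + b ≡ 0 mod e` together with `τ`. -/
def Gme2 (ζ : K) (hζ0 : ζ ≠ 0) (e : ℕ) : Subgroup (GL (Fin 2) K) :=
  Subgroup.closure
    (insert (tauGL K) {A | ∃ a b : ℤ, (e : ℤ) ∣ a + b ∧ A = Dgl ζ hζ0 a b})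

/-- `D(a,b)` with `e ∣ a + b`, as an element of `G(m,e,2)`. -/
def DG (ζ : K) (hζ0 : ζ ≠ 0) (e : ℕ) (a b : ℤ) (h : (e : ℤ) ∣ a + b) :
    ↥(Gme2 ζ hζ0 e) :=
  ⟨Dgl ζ hζ0 a b, Subgroup.subset_closure (Set.mem_insert_of_mem _ ⟨a, b, h, rfl⟩)⟩

/-- `τ` as an element of `G(m,e,2)`. -/
def tauG (ζ : K) (hζ0 : ζ ≠ 0) (e : ℕ) : ↥(Gme2 ζ hζ0 e) :=
  ⟨tauGL K, Subgroup.subset_closure (Set.mem_insert _ _)⟩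

end

/-- A representation is irreducible if the space is nonzero and has no proper nonzero
invariant subspace. -/
def IsIrreducibleRep {K : Type*} [Field K] {G : Type*} [Monoid G]
    {V : Type*} [AddCommGroup V] [Module K V] (ρ : Representation K G V) : Prop :=
  (⊥ : Submodule K V) ≠ ⊤ ∧
    ∀ W : Submodule K V, (∀ g : G, W.map (ρ g) ≤ W) → W = ⊥ ∨ W = ⊤

/-- Two representations on the same space are isomorphic if some linear automorphism
intertwines them. -/
def RepIso {K : Type*} [Field K] {G : Type*} [Monoid G]
    {V : Type*} [AddCommGroup V] [Module K V] (ρ₁ ρ₂ : Representation K G V) : Prop :=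
  ∃ T : V ≃ₗ[K] V, ∀ (g : G) (w : V), T (ρ₁ g w) = ρ₂ g (T w)

/-!
The diagonal matrices form an abelian subgroup `H` of index two, generated by `D(e, 0)` of order
`d` and `D(1, -1)` of order `m`. All `m`-th roots of unity lie in `K`, so every irreducible
representation contains an `H`-eigenvector `v`, of some weight `x^α y^β`, and `v` and `τ v` span
it. If `x^α y^β` and its `τ`-conjugate `x^β y^α` agree on `H`, then `v + τ v`, or `v` when this
sum vanishes, is an eigenvector of both `H` and `τ`, and the representation is one-dimensional.
Otherwise it is determined by the unordered pair of conjugate weights. Since `χ(N⁺)` takes the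
values `ζ^{ne}` and `1` on the conjugate elements `D(e, 0)` and `D(0, e)`, `e` is even; hence
`d ∣ n`, and the two weights agree exactly when `n ∣ α - β`. The pairs of distinct conjugate
weights are thus represented by `x^{a+b} y^b` with `0 < a < n` and `0 ≤ b < d`.

Conjugation by `τ` inverts `D(1, -1)`, so a character is given by a `d`-th root of unity at
`D(e, 0)` and signs at `τ` and `D(1, -1)`; the characters `χ(xy)`, `χ(A)`, `χ(N⁺)` realise these
three values independently.
-/

section Eigenvectors

variable {K V : Type*} [Field K] [AddCommGroup V] [Module K V]

theorem exists_apply_eq_smul_of_isRoot_minpoly {T : Module.End K V} {μ : K}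
    (hT : IsIntegral K T) (hμ : (minpoly K T).IsRoot μ) : ∃ v : V, v ≠ 0 ∧ T v = μ • v := by
  obtain ⟨q, hq⟩ := Polynomial.dvd_iff_isRoot.2 hμ
  have hq0 : q ≠ 0 := right_ne_zero_of_mul (hq ▸ minpoly.ne_zero hT)
  have hTq : Polynomial.aeval T q ≠ 0 := fun h => by
    have hle : (minpoly K T).degree ≤ q.degree := minpoly.degree_le_of_ne_zero K T hq0 h
    rw [hq, Polynomial.degree_mul, Polynomial.degree_X_sub_C,
      Polynomial.degree_eq_natDegree hq0] at hle
    norm_cast at hle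
    lia
  obtain ⟨w, hw⟩ : ∃ w, Polynomial.aeval T q w ≠ 0 := by
    by_contra! h
    exact hTq (LinearMap.ext h)
  have hzero : (T - algebraMap K _ μ) (Polynomial.aeval T q w) = 0 := by
    simpa [hq] using LinearMap.congr_fun (minpoly.aeval K T) w
  exact ⟨_, hw, sub_eq_zero.1 hzero⟩

theorem exists_apply_eq_pow_smul_of_pow_eq_one [Nontrivial V] {ω : K} {k : ℕ} [NeZero k]
    (hω : IsPrimitiveRoot ω k) {T : Module.End K V} (hT : T ^ k = 1) :
    ∃ (i : ℕ) (v : V), v ≠ 0 ∧ T v = ω ^ i • v := by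
  have hne : (Polynomial.X ^ k - 1 : Polynomial K) ≠ 0 :=
    Polynomial.X_pow_sub_C_ne_zero (NeZero.pos k) 1
  have haeval : Polynomial.aeval T (Polynomial.X ^ k - 1 : Polynomial K) = 0 := by simp [hT]
  have hint : IsIntegral K T := IsAlgebraic.isIntegral ⟨_, hne, haeval⟩
  have hdvd : minpoly K T ∣ Polynomial.X ^ k - 1 := minpoly.dvd K T haeval
  obtain ⟨μ, hμ⟩ := ((Polynomial.X_pow_sub_one_splits hω).of_dvd hne hdvd).exists_eval_eq_zero
    (minpoly.degree_pos hint).ne'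
  have hμk : μ ^ k = 1 := by
    simpa [sub_eq_zero] using Polynomial.eval_eq_zero_of_dvd_of_eval_eq_zero hdvd hμ
  obtain ⟨i, -, rfl⟩ := hω.eq_pow_of_pow_eq_one hμk
  exact ⟨i, exists_apply_eq_smul_of_isRoot_minpoly hint hμ⟩

theorem exists_common_eigenvector_of_pow_eq_one [Nontrivial V] {ω ω' : K} {k k' : ℕ} [NeZero k]
    [NeZero k'] (hω : IsPrimitiveRoot ω k) (hω' : IsPrimitiveRoot ω' k') {S T : Module.End K V}
    (hS : S ^ k = 1) (hT : T ^ k' = 1) (hST : Commute S T) :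
    ∃ (i j : ℕ) (v : V), v ≠ 0 ∧ S v = ω ^ i • v ∧ T v = ω' ^ j • v := by
  obtain ⟨i, v, hv, hSv⟩ := exists_apply_eq_pow_smul_of_pow_eq_one hω hS
  let W := Module.End.eigenspace S (ω ^ i)
  have hTW : ∀ w ∈ W, T w ∈ W := fun w hw =>
    Module.End.mapsTo_genEigenspace_of_comm hST _ _ hw
  have : Nontrivial W := Submodule.nontrivial_iff_ne_bot.2
    (Submodule.ne_bot_iff _ |>.2 ⟨v, Module.End.mem_eigenspace_iff.2 hSv, hv⟩)
  have hpow : T.restrict hTW ^ k' = 1 := by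
    rw [Module.End.pow_restrict k' hTW]
    ext w
    simp [hT]
  obtain ⟨j, w, hw, hTw⟩ := exists_apply_eq_pow_smul_of_pow_eq_one hω' hpow
  exact ⟨i, j, w, Subtype.coe_ne_coe.2 hw, Module.End.mem_eigenspace_iff.1 w.2,
    congrArg Subtype.val hTw⟩

end Eigenvectors

section RepIso

variable {K G V : Type*} [Field K] [Monoid G] [AddCommGroup V] [Module K V]

theorem IsIrreducibleRep.nontrivial {ρ : Representation K G V} (hρ : IsIrreducibleRep ρ) :
    Nontrivial V :=
  (Submodule.nontrivial_iff K).1 ⟨_, _, hρ.1⟩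

theorem repIso_equivalence :
    Equivalence (RepIso : Representation K G V → Representation K G V → Prop) where
  refl _ := ⟨LinearEquiv.refl K V, fun _ _ => rfl⟩
  symm := fun ⟨T, hT⟩ => ⟨T.symm, fun g w => T.injective (by simp [hT])⟩
  trans := fun ⟨T, hT⟩ ⟨U, hU⟩ => ⟨T.trans U, fun g w => by simp [hT, hU]⟩

end RepIso

theorem card_quot_eq_card_of_representatives {X ι : Type*} {r : X → X → Prop} (hr : Equivalence r)
    {f : ι → X} (hinj : ∀ i j, r (f i) (f j) → i = j) (hsurj : ∀ x, ∃ i, r x (f i)) :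
    Nat.card (Quot r) = Nat.card ι := by
  refine (Nat.card_eq_of_bijective (fun i => Quot.mk r (f i)) ⟨fun i j h => ?_, fun q => ?_⟩).symm
  · exact hinj i j (hr.quot_mk_eq_iff _ _ |>.1 h)
  · induction q using Quot.ind with
    | mk x => exact (hsurj x).imp fun i hi => Quot.sound (hr.symm hi)

section WeightSpace

variable {K G V : Type*} [Field K] [Group G] [AddCommGroup V] [Module K V] {H : Subgroup G}

/-- The space of vectors on which the subgroup `H` acts through the character `θ`. -/
def weightSpace (ρ : Representation K G V) (θ : ↥H →* Kˣ) : Submodule K V :=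
  ⨅ h : ↥H, Module.End.eigenspace (ρ h) (θ h)

variable {ρ π : Representation K G V} {θ ψ : ↥H →* Kˣ} {t : G} {v w : V}

theorem mem_weightSpace : v ∈ weightSpace ρ θ ↔ ∀ h : ↥H, ρ h v = (θ h : K) • v := by
  simp [weightSpace, Submodule.mem_iInf]

theorem mem_weightSpace_of_closure_eq_top {S : Set ↥H} (hS : Subgroup.closure S = ⊤)
    (hv : ∀ h ∈ S, ρ h v = (θ h : K) • v) : v ∈ weightSpace ρ θ := by
  refine mem_weightSpace.2 fun h => ?_
  induction hS ▸ Subgroup.mem_top h using Subgroup.closure_induction with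
  | mem h hh => exact hv h hh
  | one => simp
  | mul g h _ _ hg hh => simp [hg, hh, smul_smul, mul_comm]
  | inv h _ hh =>
    have hinv : (θ h : K) • ρ (h⁻¹ : G) v = v := by rw [← map_smul, ← hh, ρ.inv_self_apply]
    rw [map_inv, Units.val_inv_eq_inv_val, eq_inv_smul_iff₀ (θ h).ne_zero]
    exact hinv

theorem eq_of_mem_weightSpace (hv0 : v ≠ 0) (hθ : v ∈ weightSpace ρ θ)
    (hψ : v ∈ weightSpace ρ ψ) : θ = ψ := by
  ext h
  exact smul_left_injective K hv0 ((mem_weightSpace.1 hθ h).symm.trans (mem_weightSpace.1 hψ h))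

theorem linearIndependent_pair_of_mem_weightSpace (hθψ : θ ≠ ψ) (hv : v ∈ weightSpace ρ θ)
    (hw : w ∈ weightSpace ρ ψ) (hv0 : v ≠ 0) (hw0 : w ≠ 0) : LinearIndependent K ![v, w] := by
  refine (LinearIndependent.pair_iff' hv0).2 fun c hc => hθψ ?_
  exact eq_of_mem_weightSpace hw0 (hc ▸ Submodule.smul_mem _ c hv) hw

theorem apply_mem_weightSpace_of_intertwines {T : V →ₗ[K] V}
    (hT : ∀ g v, T (ρ g v) = π g (T v)) (hv : v ∈ weightSpace ρ θ) : T v ∈ weightSpace π θ :=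
  mem_weightSpace.2 fun h => by rw [← hT, mem_weightSpace.1 hv, map_smul]

/-- The character `h ↦ θ (t⁻¹ h t)`, the weight of `ρ t v` when `v` has weight `θ`. -/
def conjCharacter [H.Normal] (t : G) (θ : ↥H →* Kˣ) : ↥H →* Kˣ :=
  θ.comp (MulAut.conjNormal t⁻¹).toMonoidHom

theorem apply_mem_weightSpace_conjCharacter [H.Normal] (t : G) (hv : v ∈ weightSpace ρ θ) :
    ρ t v ∈ weightSpace ρ (conjCharacter t θ) := by
  refine mem_weightSpace.2 fun h => ?_
  have hconj : (h : G) * t = t * (MulAut.conjNormal t⁻¹ h : ↥H) := by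
    simp [mul_assoc]
  rw [← Module.End.mul_apply, ← map_mul, hconj, map_mul, Module.End.mul_apply,
    mem_weightSpace.1 hv, map_smul]
  rfl

theorem apply_ne_zero (g : G) (hv0 : v ≠ 0) : ρ g v ≠ 0 :=
  fun h => hv0 (by simpa [h] using (ρ.inv_self_apply g v).symm)

end WeightSpace

section IndexTwo

variable {K G V : Type*} [Field K] [Group G] [AddCommGroup V] [Module K V] {H : Subgroup G}
  {ρ π : Representation K G V} {θ ψ : ↥H →* Kˣ} {t : G} {v w : V}

theorem inv_mul_mem_of_index_eq_two (hH : H.index = 2) (ht : t ∉ H) {g : G} (hg : g ∉ H) :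
    t⁻¹ * g ∈ H := by
  simpa [Subgroup.mul_mem_iff_of_index_two hH, ht] using hg

theorem apply_eq_smul_apply_of_notMem (hH : H.index = 2) (ht : t ∉ H)
    (hv : v ∈ weightSpace ρ θ) {g : G} (hg : g ∉ H) :
    ρ g v = (θ ⟨t⁻¹ * g, inv_mul_mem_of_index_eq_two hH ht hg⟩ : K) • ρ t v := by
  rw [← map_smul, ← mem_weightSpace.1 hv, ← Module.End.mul_apply, ← map_mul,
    mul_inv_cancel_left]

theorem apply_mem_span_pair (hH : H.index = 2) (ht : t ∉ H) (hv : v ∈ weightSpace ρ θ) (g : G) :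
    ρ g v ∈ Submodule.span K {v, ρ t v} := by
  by_cases hg : g ∈ H
  · rw [mem_weightSpace.1 hv ⟨g, hg⟩]
    exact Submodule.smul_mem _ _ (Submodule.mem_span_of_mem (by simp))
  · rw [apply_eq_smul_apply_of_notMem hH ht hv hg]
    exact Submodule.smul_mem _ _ (Submodule.mem_span_of_mem (by simp))

theorem IsIrreducibleRep.span_pair_eq_top (hρ : IsIrreducibleRep ρ) (hH : H.index = 2)
    (ht : t ∉ H) (hv : v ∈ weightSpace ρ θ) (hv0 : v ≠ 0) :
    Submodule.span K {v, ρ t v} = ⊤ := by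
  refine (hρ.2 _ fun g => ?_).resolve_left fun hbot => ?_
  · rw [Submodule.map_span_le]
    rintro _ (rfl | rfl)
    · exact apply_mem_span_pair hH ht hv g
    · rw [← Module.End.mul_apply, ← map_mul]
      exact apply_mem_span_pair hH ht hv (g * t)
  · exact hv0 (Submodule.span_eq_bot.1 hbot v (by simp))

theorem IsIrreducibleRep.rank_le_two (hρ : IsIrreducibleRep ρ) (hH : H.index = 2)
    (hv : v ∈ weightSpace ρ θ) (hv0 : v ≠ 0) : Module.rank K V ≤ 2 := by
  obtain ⟨t, ht⟩ : ∃ t, t ∉ H := by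
    by_contra! h
    simp [(Subgroup.eq_top_iff' H).2 h] at hH
  rw [← rank_top, ← hρ.span_pair_eq_top hH ht hv hv0]
  refine (rank_span_le _).trans ?_
  exact_mod_cast (Cardinal.mk_insert_le.trans (by simp [one_add_one_eq_two]))

theorem IsIrreducibleRep.rank_le_one_of_apply_eq_smul (hρ : IsIrreducibleRep ρ)
    (hH : H.index = 2) (ht : t ∉ H) (hv : v ∈ weightSpace ρ θ) (hv0 : v ≠ 0) {c : K}
    (hc : ρ t v = c • v) : Module.rank K V ≤ 1 := by
  have hle : Submodule.span K {v, ρ t v} ≤ Submodule.span K {v} := by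
    rw [Submodule.span_le, hc, Set.pair_subset_iff]
    exact ⟨Submodule.mem_span_singleton_self v,
      Submodule.smul_mem _ c (Submodule.mem_span_singleton_self v)⟩
  rw [hρ.span_pair_eq_top hH ht hv hv0, top_le_iff] at hle
  rw [← rank_top, ← hle]
  exact (rank_span_le _).trans (by simp)

theorem IsIrreducibleRep.rank_le_one_of_conjCharacter_eq [H.Normal] (hρ : IsIrreducibleRep ρ)
    (hH : H.index = 2) (ht : t ∉ H) (htt : t * t = 1) (hv : v ∈ weightSpace ρ θ) (hv0 : v ≠ 0)
    (hθ : conjCharacter t θ = θ) : Module.rank K V ≤ 1 := by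
  have htv : ρ t v ∈ weightSpace ρ θ := by
    simpa only [hθ] using apply_mem_weightSpace_conjCharacter t hv
  -- `v + t v` is fixed by `t`; if it vanishes then `t v = -v`.
  by_cases hsum : v + ρ t v = 0
  · exact hρ.rank_le_one_of_apply_eq_smul hH ht hv hv0 (c := -1)
      (by rw [neg_one_smul, eq_neg_of_add_eq_zero_right hsum])
  · refine hρ.rank_le_one_of_apply_eq_smul hH ht (Submodule.add_mem _ hv htv) hsum (c := 1) ?_
    rw [map_add, ← Module.End.mul_apply, ← map_mul, htt, map_one, Module.End.one_apply,
      one_smul, add_comm]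

theorem linearIndependent_pair_apply [H.Normal] (hθ : conjCharacter t θ ≠ θ)
    (hv : v ∈ weightSpace ρ θ) (hv0 : v ≠ 0) : LinearIndependent K ![v, ρ t v] :=
  linearIndependent_pair_of_mem_weightSpace hθ.symm hv (apply_mem_weightSpace_conjCharacter t hv)
    hv0 (apply_ne_zero t hv0)

theorem isIrreducibleRep_of_span_pair_eq_top [H.Normal] (hθ : conjCharacter t θ ≠ θ)
    (hv : v ∈ weightSpace ρ θ) (hv0 : v ≠ 0) (hspan : Submodule.span K {v, ρ t v} = ⊤) :
    IsIrreducibleRep ρ := by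
  have : Nontrivial V := ⟨v, 0, hv0⟩
  refine ⟨bot_ne_top, fun W hW => or_iff_not_imp_left.2 fun hWbot => ?_⟩
  have hmem : ∀ g, ∀ w ∈ W, ρ g w ∈ W := fun g w hw => hW g (Submodule.mem_map_of_mem hw)
  suffices hvW : v ∈ W by
    rw [eq_top_iff, ← hspan, Submodule.span_le]
    rintro _ (rfl | rfl)
    exacts [hvW, hmem t v hvW]
  obtain ⟨w, hw, hw0⟩ := Submodule.exists_mem_ne_zero_of_ne_bot hWbot
  obtain ⟨x, y, rfl⟩ := Submodule.mem_span_pair.1 (hspan ▸ Submodule.mem_top (x := w))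
  obtain ⟨h, hh⟩ : ∃ h, conjCharacter t θ h ≠ θ h := by
    by_contra! h
    exact hθ (MonoidHom.ext h)
  -- `h - θᵗ(h)` annihilates the component of `w` along `t v`.
  have hproj : (((θ h : K) - conjCharacter t θ h) * x) • v ∈ W := by
    have := W.sub_mem (hmem h _ hw) (W.smul_mem (conjCharacter t θ h : K) hw)
    rw [map_add, map_smul, map_smul, mem_weightSpace.1 hv,
      mem_weightSpace.1 (apply_mem_weightSpace_conjCharacter t hv)] at this
    convert this using 1
    module
  by_cases hx : x = 0
  · have hy : y ≠ 0 := fun hy => hw0 (by simp [hx, hy])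
    rw [hx, zero_smul, zero_add, W.smul_mem_iff hy] at hw
    simpa using hmem t⁻¹ _ hw
  · exact (W.smul_mem_iff (mul_ne_zero (sub_ne_zero.2 (Units.val_injective.ne hh.symm)) hx)).1 hproj

theorem IsIrreducibleRep.eq_or_eq_conjCharacter [H.Normal] (hρ : IsIrreducibleRep ρ)
    (hH : H.index = 2) (ht : t ∉ H) (hθ : conjCharacter t θ ≠ θ) (hv : v ∈ weightSpace ρ θ)
    (hv0 : v ≠ 0) (hw : w ∈ weightSpace ρ ψ) (hw0 : w ≠ 0) : ψ = θ ∨ ψ = conjCharacter t θ := by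
  obtain ⟨x, y, rfl⟩ := Submodule.mem_span_pair.1
    (hρ.span_pair_eq_top hH ht hv hv0 ▸ Submodule.mem_top (x := w))
  by_cases hy : y = 0
  · simp only [hy, zero_smul, add_zero] at hw hw0
    exact Or.inl (eq_of_mem_weightSpace hw0 hw (Submodule.smul_mem _ x hv))
  · refine Or.inr (MonoidHom.ext fun h => Units.ext ?_)
    have hcomb : (((θ h : K) - ψ h) * x) • v + (((conjCharacter t θ h : K) - ψ h) * y) • ρ t v
        = 0 := by
      have := mem_weightSpace.1 hw h
      rw [map_add, map_smul, map_smul, mem_weightSpace.1 hv,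
        mem_weightSpace.1 (apply_mem_weightSpace_conjCharacter t hv), ← sub_eq_zero] at this
      rw [← this]
      module
    have hcoef := (LinearIndependent.pair_iff.1 (linearIndependent_pair_apply hθ hv hv0)
      _ _ hcomb).2
    exact (sub_eq_zero.1 ((mul_eq_zero.1 hcoef).resolve_right hy)).symm

theorem repIso_of_mem_weightSpace [H.Normal] (hH : H.index = 2) (ht : t ∉ H)
    (hρ : IsIrreducibleRep ρ) (hπ : IsIrreducibleRep π) (hθ : conjCharacter t θ ≠ θ)
    (hv : v ∈ weightSpace ρ θ) (hv0 : v ≠ 0) (hw : w ∈ weightSpace π θ) (hw0 : w ≠ 0) :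
    RepIso ρ π := by
  let b := Module.Basis.mk (linearIndependent_pair_apply hθ hv hv0)
    (by rw [Matrix.range_cons_cons_empty, hρ.span_pair_eq_top hH ht hv hv0])
  let c := Module.Basis.mk (linearIndependent_pair_apply hθ hw hw0)
    (by rw [Matrix.range_cons_cons_empty, hπ.span_pair_eq_top hH ht hw hw0])
  let T : V ≃ₗ[K] V := b.equiv c (Equiv.refl _)
  have hTv : T v = w := by simpa [b, c] using b.equiv_apply 0 c (Equiv.refl _)
  have hTtv : T (ρ t v) = π t w := by simpa [b, c] using b.equiv_apply 1 c (Equiv.refl _)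
  have hTg : ∀ g, T (ρ g v) = π g w := fun g => by
    by_cases hg : g ∈ H
    · rw [mem_weightSpace.1 hv ⟨g, hg⟩, mem_weightSpace.1 hw ⟨g, hg⟩, map_smul, hTv]
    · rw [apply_eq_smul_apply_of_notMem hH ht hv hg, apply_eq_smul_apply_of_notMem hH ht hw hg,
        map_smul, hTtv]
  refine ⟨T, fun g => LinearMap.congr_fun (f := T.toLinearMap ∘ₗ ρ g) (g := π g ∘ₗ T.toLinearMap)
    (b.ext fun i => ?_)⟩
  fin_cases i
  · simp [b, hTv, hTg]
  · simpa [b, hTtv] using hTg (g * t)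

end IndexTwo

section DualCharacterSystem

variable {ι G R : Type*} [Group G]

/-- Characters `χ i` of `G` and generators `g i` of `G` that are dual to each other: `χ i` is
trivial on `g j` for `i ≠ j`, and `χ i (g i)` is a primitive `k i`-th root of unity, the largest
order that any character takes on `g i`. -/
structure IsDualCharacterSystem [CommMonoid R] (χ : ι → G →* Rˣ) (g : ι → G) (k : ι → ℕ) :
    Prop where
  closure_eq_top : Subgroup.closure (Set.range g) = ⊤
  apply_eq_one : Pairwise fun i j => χ i (g j) = 1
  isPrimitiveRoot : ∀ i, IsPrimitiveRoot (χ i (g i)) (k i)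
  apply_pow_eq_one : ∀ (ψ : G →* Rˣ) i, ψ (g i) ^ k i = 1

namespace IsDualCharacterSystem

section CommMonoid

variable [CommMonoid R] {χ : ι → G →* Rˣ} {g : ι → G} {k : ι → ℕ}

theorem ext_of_apply_eq (hχ : IsDualCharacterSystem χ g k) {ψ φ : G →* Rˣ}
    (h : ∀ i, ψ (g i) = φ (g i)) : ψ = φ :=
  MonoidHom.eq_of_eqOn_dense hχ.closure_eq_top (Set.forall_mem_range.2 h)

theorem orderOf_eq (hχ : IsDualCharacterSystem χ g k) (i : ι) : orderOf (χ i) = k i := by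
  apply Nat.dvd_antisymm
  · refine orderOf_dvd_of_pow_eq_one (hχ.ext_of_apply_eq fun j => ?_)
    obtain rfl | hij := eq_or_ne i j
    · simp [hχ.apply_pow_eq_one]
    · simp [hχ.apply_eq_one hij]
  · rw [(hχ.isPrimitiveRoot i).eq_orderOf]
    exact orderOf_map_dvd (MonoidHom.eval (g i)) (χ i)

theorem prod_pow_apply [Fintype ι] (hχ : IsDualCharacterSystem χ g k) (a : ι → ℕ) (j : ι) :
    (∏ i, χ i ^ a i) (g j) = χ j (g j) ^ a j := by
  rw [MonoidHom.finsetProd_apply, Fintype.prod_eq_single j fun i hij => ?_, MonoidHom.pow_apply]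
  rw [MonoidHom.pow_apply, hχ.apply_eq_one hij, one_pow]

end CommMonoid

section IsDomain

variable [CommRing R] [IsDomain R] {χ : ι → G →* Rˣ} {g : ι → G} {k : ι → ℕ}
  [∀ i, NeZero (k i)]

theorem apply_mem_powers (hχ : IsDualCharacterSystem χ g k) (ψ : G →* Rˣ) (i : ι) :
    ψ (g i) ∈ Submonoid.powers (χ i (g i)) := by
  obtain ⟨a, -, ha⟩ := (hχ.isPrimitiveRoot i).eq_pow_of_mem_rootsOfUnity
    (hχ.apply_pow_eq_one ψ i)
  exact ⟨a, ha⟩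

theorem exists_eq_prod_pow [Fintype ι] (hχ : IsDualCharacterSystem χ g k) (ψ : G →* Rˣ) :
    ∃ a : ι → ℕ, ψ = ∏ i, χ i ^ a i := by
  choose a ha using hχ.apply_mem_powers ψ
  exact ⟨a, hχ.ext_of_apply_eq fun j => by rw [hχ.prod_pow_apply, ← ha]⟩

theorem card_eq_prod [Fintype ι] (hχ : IsDualCharacterSystem χ g k) :
    Nat.card (G →* Rˣ) = ∏ i, k i := by
  let values (ψ : G →* Rˣ) (i : ι) : Submonoid.powers (χ i (g i)) :=
    ⟨ψ (g i), hχ.apply_mem_powers ψ i⟩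
  have hvalues : Function.Bijective values := by
    refine ⟨fun ψ φ h => hχ.ext_of_apply_eq fun i => congrArg Subtype.val (congrFun h i),
      fun u => ?_⟩
    choose a ha using fun i => (u i).2
    exact ⟨∏ i, χ i ^ a i, funext fun i => Subtype.ext ((hχ.prod_pow_apply a i).trans (ha i))⟩
  rw [Nat.card_eq_of_bijective values hvalues, Nat.card_pi]
  exact Finset.prod_congr rfl fun i _ => by
    rw [Nat.card_submonoidPowers, ← (hχ.isPrimitiveRoot i).eq_orderOf]

end IsDomain

end IsDualCharacterSystem

end DualCharacterSystem

section DiagonalSubgroup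

variable {K : Type*} [Field K]

/-- The exponents `(a, b)` of the diagonal generators `D(a, b)` of `G(m,e,2)`. -/
def exponentLattice (e : ℕ) : AddSubgroup (ℤ × ℤ) :=
  (AddSubgroup.zmultiples (e : ℤ)).comap (AddMonoidHom.fst ℤ ℤ + AddMonoidHom.snd ℤ ℤ)

theorem mem_exponentLattice {e : ℕ} {p : ℤ × ℤ} :
    p ∈ exponentLattice e ↔ (e : ℤ) ∣ p.1 + p.2 :=
  Int.mem_zmultiples_iff

/-- The homomorphism `(a, b) ↦ D(a, b)`. -/
def diagonalHom (ζ : K) (hζ0 : ζ ≠ 0) (e : ℕ) :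
    Multiplicative ↥(exponentLattice e) →* ↥(Gme2 ζ hζ0 e) :=
  MonoidHom.mk' (fun p => DG ζ hζ0 e p.toAdd.1.1 p.toAdd.1.2 (mem_exponentLattice.1 p.toAdd.2))
    fun p q => by
      ext i j
      fin_cases i <;> fin_cases j <;>
        simp [DG, Dgl, Matrix.GeneralLinearGroup.mkOfDetNeZero, zpow_add₀ hζ0]

/-- The subgroup `H` of diagonal matrices in `G(m,e,2)`. -/
def diagonalSubgroup (ζ : K) (hζ0 : ζ ≠ 0) (e : ℕ) : Subgroup ↥(Gme2 ζ hζ0 e) :=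
  (diagonalHom ζ hζ0 e).range

/-- The element `D(1,-1)` of order `m`, the rotation of the dihedral subgroup `G(m,m,2)`. -/
def dihedralRotation (ζ : K) (hζ0 : ζ ≠ 0) (e : ℕ) : ↥(Gme2 ζ hζ0 e) :=
  DG ζ hζ0 e 1 (-1) (by simp)

/-- The diagonal reflection `D(e,0)` of order `d = m / e`. -/
def diagonalReflection (ζ : K) (hζ0 : ζ ≠ 0) (e : ℕ) : ↥(Gme2 ζ hζ0 e) :=
  DG ζ hζ0 e e 0 (by simp)

variable {ζ : K} {hζ0 : ζ ≠ 0} {e : ℕ}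

theorem DG_eq_diagonalHom (a b : ℤ) (h : (e : ℤ) ∣ a + b) :
    DG ζ hζ0 e a b h = diagonalHom ζ hζ0 e (.ofAdd ⟨(a, b), mem_exponentLattice.2 h⟩) :=
  rfl

theorem DG_mem_diagonalSubgroup (a b : ℤ) (h : (e : ℤ) ∣ a + b) :
    DG ζ hζ0 e a b h ∈ diagonalSubgroup ζ hζ0 e :=
  ⟨_, (DG_eq_diagonalHom a b h).symm⟩

theorem diagonalHom_eq_one {p : Multiplicative ↥(exponentLattice e)}
    (h₁ : ζ ^ p.toAdd.1.1 = 1) (h₂ : ζ ^ p.toAdd.1.2 = 1) : diagonalHom ζ hζ0 e p = 1 := by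
  ext i j
  fin_cases i <;> fin_cases j <;>
    simp [diagonalHom, DG, Dgl, Matrix.GeneralLinearGroup.mkOfDetNeZero, h₁, h₂]

theorem tauG_mul_self : tauG ζ hζ0 e * tauG ζ hζ0 e = 1 := by
  ext i j
  fin_cases i <;> fin_cases j <;>
    simp [tauG, tauGL, Matrix.GeneralLinearGroup.mkOfDetNeZero, Matrix.mul_apply]

theorem tauG_inv : (tauG ζ hζ0 e)⁻¹ = tauG ζ hζ0 e :=
  inv_eq_of_mul_eq_one_left tauG_mul_self

theorem tauG_mul_DG (a b : ℤ) (h : (e : ℤ) ∣ a + b) :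
    tauG ζ hζ0 e * DG ζ hζ0 e a b h = DG ζ hζ0 e b a (add_comm a b ▸ h) * tauG ζ hζ0 e := by
  ext i j
  fin_cases i <;> fin_cases j <;>
    simp [DG, Dgl, tauG, tauGL, Matrix.GeneralLinearGroup.mkOfDetNeZero, Matrix.mul_apply]

theorem tauG_conj_DG (a b : ℤ) (h : (e : ℤ) ∣ a + b) :
    tauG ζ hζ0 e * DG ζ hζ0 e a b h * tauG ζ hζ0 e = DG ζ hζ0 e b a (add_comm a b ▸ h) := by
  rw [tauG_mul_DG, mul_assoc, tauG_mul_self, mul_one]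

theorem exists_eq_zpow_mul_zpow_of_mem_diagonalSubgroup {g : ↥(Gme2 ζ hζ0 e)}
    (hg : g ∈ diagonalSubgroup ζ hζ0 e) :
    ∃ i j : ℤ, g = diagonalReflection ζ hζ0 e ^ i * dihedralRotation ζ hζ0 e ^ j := by
  obtain ⟨⟨⟨a, b⟩, hab⟩, rfl⟩ := hg
  obtain ⟨i, hi⟩ := mem_exponentLattice.1 hab
  refine ⟨i, -b, ?_⟩
  simp only [dihedralRotation, diagonalReflection, DG_eq_diagonalHom, ← map_zpow, ← map_mul,
    ← ofAdd_zsmul, ← ofAdd_add]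
  have hpair : (⟨(a, b), hab⟩ : ↥(exponentLattice e)) =
      i • ⟨(e, 0), mem_exponentLattice.2 (by simp)⟩ +
        (-b) • ⟨(1, -1), mem_exponentLattice.2 (by simp)⟩ := by
    refine Subtype.ext (Prod.ext ?_ ?_)
    · simpa [mul_comm, eq_sub_iff_add_eq, ← sub_eq_add_neg] using hi
    · simp
  exact congrArg (fun p => diagonalHom ζ hζ0 e (.ofAdd p)) hpair

theorem commute_dihedralRotation_diagonalReflection :
    Commute (dihedralRotation ζ hζ0 e) (diagonalReflection ζ hζ0 e) := by
  rw [dihedralRotation, diagonalReflection, DG_eq_diagonalHom, DG_eq_diagonalHom]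
  exact (Commute.all _ _).map _

theorem dihedralRotation_pow_eq_one {m : ℕ} (hζ : ζ ^ m = 1) :
    dihedralRotation ζ hζ0 e ^ m = 1 := by
  rw [dihedralRotation, DG_eq_diagonalHom, ← map_pow, ← ofAdd_nsmul]
  exact diagonalHom_eq_one (by simpa using hζ) (by simpa using hζ)

theorem diagonalReflection_pow_eq_one {d : ℕ} (hζ : ζ ^ (d * e) = 1) :
    diagonalReflection ζ hζ0 e ^ d = 1 := by
  rw [diagonalReflection, DG_eq_diagonalHom, ← map_pow, ← ofAdd_nsmul]
  exact diagonalHom_eq_one (by simpa using mod_cast hζ) (by simp)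

theorem tauG_conj_dihedralRotation :
    tauG ζ hζ0 e * dihedralRotation ζ hζ0 e * tauG ζ hζ0 e = (dihedralRotation ζ hζ0 e)⁻¹ := by
  rw [dihedralRotation, tauG_conj_DG, DG_eq_diagonalHom, DG_eq_diagonalHom, ← map_inv]
  rfl

theorem tauG_notMem_diagonalSubgroup : tauG ζ hζ0 e ∉ diagonalSubgroup ζ hζ0 e := by
  rintro ⟨p, hp⟩
  have := congrArg (fun g : ↥(Gme2 ζ hζ0 e) => (g : GL (Fin 2) K).1 0 1) hp
  simp [diagonalHom, DG, Dgl, tauG, tauGL, Matrix.GeneralLinearGroup.mkOfDetNeZero] at this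

theorem closure_insert_tauG_eq_top :
    Subgroup.closure (insert (tauG ζ hζ0 e) ↑(diagonalSubgroup ζ hζ0 e)) = ⊤ := by
  refine top_le_iff.1 (Subgroup.closure_closure_coe_preimage.ge.trans (Subgroup.closure_mono ?_))
  rintro ⟨_, _⟩ (rfl | ⟨a, b, h, rfl⟩)
  · exact Set.mem_insert _ _
  · exact Set.mem_insert_of_mem _ (DG_mem_diagonalSubgroup a b h)

theorem mem_or_mul_tauG_mem_diagonalSubgroup (g : ↥(Gme2 ζ hζ0 e)) :
    g ∈ diagonalSubgroup ζ hζ0 e ∨ g * tauG ζ hζ0 e ∈ diagonalSubgroup ζ hζ0 e := by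
  have hconj : ∀ g ∈ diagonalSubgroup ζ hζ0 e,
      tauG ζ hζ0 e * g * tauG ζ hζ0 e ∈ diagonalSubgroup ζ hζ0 e := by
    rintro _ ⟨p, rfl⟩
    exact tauG_conj_DG (hζ0 := hζ0) _ _ (mem_exponentLattice.1 p.toAdd.2) ▸
      DG_mem_diagonalSubgroup _ _ _
  have hτ : ∀ g, g ∈ diagonalSubgroup ζ hζ0 e ∨ g * tauG ζ hζ0 e ∈ diagonalSubgroup ζ hζ0 e →
      tauG ζ hζ0 e * g ∈ diagonalSubgroup ζ hζ0 e ∨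
        tauG ζ hζ0 e * g * tauG ζ hζ0 e ∈ diagonalSubgroup ζ hζ0 e := by
    rintro g (hg | hg)
    · exact Or.inr (hconj g hg)
    · have := hconj _ hg
      rw [mul_assoc, mul_assoc, tauG_mul_self, mul_one] at this
      exact Or.inl this
  have htop := closure_insert_tauG_eq_top (ζ := ζ) (hζ0 := hζ0) (e := e)
  induction htop ▸ Subgroup.mem_top g using Subgroup.closure_induction_left with
  | one => exact Or.inl (one_mem _)
  | mul_left x hx y _ hy =>
    rcases hx with rfl | hx
    · exact hτ y hy
    · rw [mul_assoc]
      exact hy.imp (mul_mem hx) (mul_mem hx)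
  | inv_mul_cancel x hx y _ hy =>
    rcases hx with rfl | hx
    · rw [tauG_inv]
      exact hτ y hy
    · rw [mul_assoc]
      exact hy.imp (mul_mem (inv_mem hx)) (mul_mem (inv_mem hx))

theorem index_diagonalSubgroup : (diagonalSubgroup ζ hζ0 e).index = 2 := by
  refine Subgroup.index_eq_two_iff.2 ⟨tauG ζ hζ0 e, fun g => ?_⟩
  rw [xor_iff_or_and_not_and]
  refine ⟨(mem_or_mul_tauG_mem_diagonalSubgroup g).symm, fun ⟨hgτ, hg⟩ => ?_⟩
  exact tauG_notMem_diagonalSubgroup ((mul_mem_cancel_left hg).1 hgτ)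

instance diagonalSubgroup_normal : (diagonalSubgroup ζ hζ0 e).Normal :=
  Subgroup.normal_of_index_eq_two index_diagonalSubgroup

theorem closure_diagonalReflection_dihedralRotation_eq_top :
    Subgroup.closure {⟨diagonalReflection ζ hζ0 e, DG_mem_diagonalSubgroup _ _ _⟩,
      ⟨dihedralRotation ζ hζ0 e, DG_mem_diagonalSubgroup _ _ _⟩} =
      (⊤ : Subgroup ↥(diagonalSubgroup ζ hζ0 e)) := by
  refine (Subgroup.eq_top_iff' _).2 fun h => ?_
  obtain ⟨i, j, hij⟩ := exists_eq_zpow_mul_zpow_of_mem_diagonalSubgroup h.2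
  rw [show h = ⟨diagonalReflection ζ hζ0 e, DG_mem_diagonalSubgroup _ _ _⟩ ^ i *
    ⟨dihedralRotation ζ hζ0 e, DG_mem_diagonalSubgroup _ _ _⟩ ^ j from Subtype.ext hij]
  exact mul_mem (zpow_mem (Subgroup.subset_closure (by simp)) i)
    (zpow_mem (Subgroup.subset_closure (by simp)) j)

theorem closure_diagonalReflection_tauG_dihedralRotation_eq_top :
    Subgroup.closure
      {diagonalReflection ζ hζ0 e, tauG ζ hζ0 e, dihedralRotation ζ hζ0 e} = ⊤ := by
  refine top_le_iff.1 (closure_insert_tauG_eq_top.ge.trans ((Subgroup.closure_le _).2 ?_))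
  rintro _ (rfl | hg)
  · exact Subgroup.subset_closure (by simp)
  · obtain ⟨i, j, rfl⟩ := exists_eq_zpow_mul_zpow_of_mem_diagonalSubgroup hg
    exact mul_mem (zpow_mem (Subgroup.subset_closure (by simp)) i)
      (zpow_mem (Subgroup.subset_closure (by simp)) j)

end DiagonalSubgroup

theorem exists_modEq_or_neg_modEq {n : ℕ} (hn : 0 < n) {σ : ℤ} (hσ : ¬(n : ℤ) ∣ σ) :
    ∃ a : ℕ, 0 < a ∧ a < n ∧ (σ ≡ a [ZMOD 2 * n] ∨ -σ ≡ a [ZMOD 2 * n]) := by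
  have hr0 : 0 ≤ σ % (2 * n) := Int.emod_nonneg _ (by lia)
  have hr2n : σ % (2 * n) < 2 * n := Int.emod_lt_of_pos _ (by lia)
  have hdvd : (2 * n : ℤ) ∣ σ - σ % (2 * n) := Int.dvd_self_sub_emod
  have hndvd : ¬(n : ℤ) ∣ σ % (2 * n) := fun h =>
    hσ ((dvd_sub_left h).1 ((Dvd.intro_left 2 rfl).trans hdvd))
  obtain ⟨r, hr⟩ := Int.eq_ofNat_of_zero_le hr0
  rw [hr] at hndvd hdvd hr2n
  have hr0 : r ≠ 0 := by
    rintro rfl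
    simp at hndvd
  have hrn : r ≠ n := by
    rintro rfl
    simp at hndvd
  obtain hlt | hgt := hrn.lt_or_gt
  · exact ⟨r, by lia, hlt, Or.inl (Int.modEq_iff_dvd.2 (by simpa using hdvd.neg_right))⟩
  · have hsub : ((2 * n - r : ℕ) : ℤ) - -σ = σ - r + 2 * n := by lia
    exact ⟨2 * n - r, by lia, by lia,
      Or.inr (Int.modEq_iff_dvd.2 (hsub ▸ dvd_add hdvd (dvd_refl _)))⟩

section Weight

variable {K : Type*} [Field K] {ζ : K} {hζ0 : ζ ≠ 0} {e : ℕ}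

theorem zpow_eq_zpow_iff_modEq_of_isPrimitiveRoot {k : ℕ} (hζ : IsPrimitiveRoot ζ k) (hζ0 : ζ ≠ 0)
    {a b : ℤ} : ζ ^ a = ζ ^ b ↔ a ≡ b [ZMOD k] := by
  rw [Int.modEq_comm, Int.modEq_iff_dvd, ← hζ.zpow_eq_one_iff_dvd, zpow_sub₀ hζ0,
    div_eq_one_iff_eq (zpow_ne_zero _ hζ0)]

theorem diagonalSubgroup_cases {motive : ↥(diagonalSubgroup ζ hζ0 e) → Prop}
    (DG : ∀ (a b : ℤ) (h : (e : ℤ) ∣ a + b),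
      motive ⟨DG ζ hζ0 e a b h, DG_mem_diagonalSubgroup a b h⟩) (h : ↥(diagonalSubgroup ζ hζ0 e)) :
    motive h := by
  obtain ⟨_, p, rfl⟩ := h
  exact DG _ _ (mem_exponentLattice.1 p.toAdd.2)

variable (ζ hζ0 e) in
/-- The character of `H` reading off the `i`-th diagonal entry. -/
def diagonalEntry (i : Fin 2) : ↥(diagonalSubgroup ζ hζ0 e) →* Kˣ :=
  MonoidHom.toHomUnits
    { toFun := fun h => (h : ↥(Gme2 ζ hζ0 e)).1.1 i i
      map_one' := by simp
      map_mul' := fun g h => by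
        cases g using diagonalSubgroup_cases
        cases h using diagonalSubgroup_cases
        fin_cases i <;>
          simp [DG, Dgl, Matrix.GeneralLinearGroup.mkOfDetNeZero] }

variable (ζ hζ0 e) in
/-- The character `χ_H(x^α y^β)` of `H`, that is, `D(a, b) ↦ ζ ^ (α a + β b)`. -/
def weight (α β : ℤ) : ↥(diagonalSubgroup ζ hζ0 e) →* Kˣ :=
  diagonalEntry ζ hζ0 e 0 ^ α * diagonalEntry ζ hζ0 e 1 ^ β

theorem weight_DG (α β a b : ℤ) (h : (e : ℤ) ∣ a + b) :
    (weight ζ hζ0 e α β ⟨DG ζ hζ0 e a b h, DG_mem_diagonalSubgroup a b h⟩ : K) =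
      ζ ^ (α * a + β * b) := by
  simp [weight, diagonalEntry, DG, Dgl, Matrix.GeneralLinearGroup.mkOfDetNeZero, zpow_add₀ hζ0,
    zpow_mul', MonoidHom.toHomUnits]

theorem conjCharacter_tauG_weight (α β : ℤ) :
    conjCharacter (tauG ζ hζ0 e) (weight ζ hζ0 e α β) = weight ζ hζ0 e β α := by
  ext h
  cases h using diagonalSubgroup_cases with
  | DG a b h =>
    have hconj : MulAut.conjNormal (tauG ζ hζ0 e)⁻¹
        (⟨DG ζ hζ0 e a b h, DG_mem_diagonalSubgroup a b h⟩ : ↥(diagonalSubgroup ζ hζ0 e)) =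
        ⟨DG ζ hζ0 e b a (add_comm a b ▸ h), DG_mem_diagonalSubgroup b a _⟩ := by
      refine Subtype.ext ?_
      rw [MulAut.conjNormal_apply, inv_inv, tauG_inv, tauG_conj_DG]
    rw [conjCharacter, MonoidHom.comp_apply, MulEquiv.coe_toMonoidHom, hconj, weight_DG, weight_DG,
      add_comm]

variable {d n : ℕ}

theorem weight_eq_weight_iff_zpow_eq {α β α' β' : ℤ} :
    weight ζ hζ0 e α β = weight ζ hζ0 e α' β' ↔
      ζ ^ (α - β) = ζ ^ (α' - β') ∧ ζ ^ (α * e) = ζ ^ (α' * e) := by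
  constructor
  · intro h
    have hrot := congrArg Units.val
      (DFunLike.congr_fun h ⟨_, DG_mem_diagonalSubgroup 1 (-1) (by simp)⟩)
    have hrefl := congrArg Units.val
      (DFunLike.congr_fun h ⟨_, DG_mem_diagonalSubgroup e 0 (by simp)⟩)
    simp only [weight_DG] at hrot hrefl
    exact ⟨by simpa [sub_eq_add_neg] using hrot, by simpa using hrefl⟩
  · rintro ⟨hrot, hrefl⟩
    refine MonoidHom.eq_of_eqOn_dense closure_diagonalReflection_dihedralRotation_eq_top ?_
    rintro _ (rfl | rfl)
    · refine Units.ext ((weight_DG ..).trans (Eq.trans ?_ (weight_DG ..).symm))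
      simpa only [mul_zero, add_zero] using hrefl
    · refine Units.ext ((weight_DG ..).trans (Eq.trans ?_ (weight_DG ..).symm))
      simpa only [mul_one, mul_neg, ← sub_eq_add_neg] using hrot

theorem weight_eq_weight_iff (hζ : IsPrimitiveRoot ζ (d * e)) (he : 0 < e) {α β α' β' : ℤ} :
    weight ζ hζ0 e α β = weight ζ hζ0 e α' β' ↔
      α - β ≡ α' - β' [ZMOD (d * e : ℕ)] ∧ α ≡ α' [ZMOD d] := by
  rw [weight_eq_weight_iff_zpow_eq,
    zpow_eq_zpow_iff_modEq_of_isPrimitiveRoot hζ hζ0,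
    zpow_eq_zpow_iff_modEq_of_isPrimitiveRoot hζ hζ0, Nat.cast_mul,
    Int.ModEq.mul_right_cancel_iff' (by lia)]

theorem conjCharacter_tauG_weight_eq_self_iff (hζ : IsPrimitiveRoot ζ (d * e)) (he : 0 < e)
    (hn : d * e = 2 * n) (hdn : d ∣ n) {α β : ℤ} :
    conjCharacter (tauG ζ hζ0 e) (weight ζ hζ0 e α β) = weight ζ hζ0 e α β ↔
      (n : ℤ) ∣ α - β := by
  have htwo : (α - β) - (β - α) = 2 * (α - β) := by ring
  rw [conjCharacter_tauG_weight, weight_eq_weight_iff hζ he, Int.modEq_iff_dvd,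
    Int.modEq_iff_dvd, hn, htwo, Nat.cast_mul, Nat.cast_ofNat,
    mul_dvd_mul_iff_left two_ne_zero]
  exact and_iff_left_of_imp (Int.natCast_dvd_natCast.2 hdn).trans

theorem exists_weight_eq (hζ : IsPrimitiveRoot ζ (d * e)) (hd : 0 < d) (he : 0 < e)
    (hn : d * e = 2 * n) {α β : ℤ} (hαβ : ¬(n : ℤ) ∣ α - β) :
    ∃ a b : ℕ, 0 < a ∧ a < n ∧ b < d ∧
      (weight ζ hζ0 e α β = weight ζ hζ0 e (a + b) b ∨
        weight ζ hζ0 e β α = weight ζ hζ0 e (a + b) b) := by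
  have hn0 : 0 < n := Nat.pos_of_mul_pos_left (hn ▸ Nat.mul_pos hd he)
  have hweight : ∀ (γ δ : ℤ) (a : ℕ), γ - δ ≡ a [ZMOD 2 * n] →
      ∃ b < d, weight ζ hζ0 e γ δ = weight ζ hζ0 e (a + (b : ℕ)) b := by
    intro γ δ a ha
    have hmod : γ ≡ a + (γ - a) % d [ZMOD d] := by
      simpa using (Int.mod_modEq (γ - a) d).symm.add_left a
    lift (γ - a) % d to ℕ using Int.emod_nonneg _ (by lia) with b hb
    have hbd : (b : ℤ) < d := hb ▸ Int.emod_lt_of_pos _ (by lia)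
    refine ⟨b, by lia, (weight_eq_weight_iff hζ he).2 ⟨?_, hmod⟩⟩
    rw [hn]
    simpa using ha
  obtain ⟨a, ha0, han, ha | ha⟩ := exists_modEq_or_neg_modEq hn0 hαβ
  · obtain ⟨b, hbd, hb⟩ := hweight α β a ha
    exact ⟨a, b, ha0, han, hbd, Or.inl hb⟩
  · obtain ⟨b, hbd, hb⟩ := hweight β α a (by simpa using ha)
    exact ⟨a, b, ha0, han, hbd, Or.inr hb⟩

theorem eq_and_eq_of_weight_eq (hζ : IsPrimitiveRoot ζ (d * e)) (he : 0 < e)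
    (hn : d * e = 2 * n) {a b a' b' : ℕ} (ha0 : 0 < a) (ha : a < n) (hb : b < d) (ha' : a' < n)
    (hb' : b' < d)
    (h : weight ζ hζ0 e (a + b) b = weight ζ hζ0 e (a' + b') b' ∨
      weight ζ hζ0 e (a + b) b = weight ζ hζ0 e b' (a' + b')) : a = a' ∧ b = b' := by
  simp only [weight_eq_weight_iff hζ he, hn, add_sub_cancel_right, sub_add_cancel_right] at h
  obtain ⟨haa, hbb⟩ | ⟨haa, -⟩ := h
  · obtain rfl : a = a' :=
      (Int.natCast_modEq_iff.1 haa).eq_of_lt_of_lt (by lia) (by lia)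
    exact ⟨rfl, (Int.natCast_modEq_iff.1 (hbb.add_left_cancel' _)).eq_of_lt_of_lt hb hb'⟩
  · have hneg : -(a' : ℤ) - a = -((a' + a : ℕ) : ℤ) := by lia
    have hdvd := Int.modEq_iff_dvd.1 haa
    rw [hneg, dvd_neg] at hdvd
    exact absurd (Nat.le_of_dvd (by lia) (Int.natCast_dvd_natCast.1 hdvd)) (by lia)

theorem exists_mem_weightSpace_weight {V : Type*} [AddCommGroup V] [Module K V] [Nontrivial V]
    (hζ : IsPrimitiveRoot ζ (d * e)) (hd : 0 < d) (he : 0 < e)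
    (ρ : Representation K ↥(Gme2 ζ hζ0 e) V) :
    ∃ (α β : ℤ) (v : V), v ≠ 0 ∧ v ∈ weightSpace ρ (weight ζ hζ0 e α β) := by
  have : NeZero d := ⟨hd.ne'⟩
  have : NeZero (d * e) := ⟨(Nat.mul_pos hd he).ne'⟩
  have hζe : IsPrimitiveRoot (ζ ^ e) d := hζ.pow (NeZero.pos _) (mul_comm d e)
  obtain ⟨i, j, v, hv0, hrot, hrefl⟩ := exists_common_eigenvector_of_pow_eq_one hζ hζe
    (S := ρ (dihedralRotation ζ hζ0 e)) (T := ρ (diagonalReflection ζ hζ0 e))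
    (by rw [← map_pow, dihedralRotation_pow_eq_one hζ.pow_eq_one, map_one])
    (by rw [← map_pow, diagonalReflection_pow_eq_one hζ.pow_eq_one, map_one])
    (commute_dihedralRotation_diagonalReflection.map ρ)
  refine ⟨j, j - i, v, hv0, mem_weightSpace_of_closure_eq_top
    closure_diagonalReflection_dihedralRotation_eq_top ?_⟩
  rintro _ (rfl | rfl)
  · refine hrefl.trans (congrArg (· • v) (Eq.trans ?_ (weight_DG ..).symm))
    rw [← pow_mul, ← zpow_natCast]
    congr 1
    push_cast
    ring
  · refine hrot.trans (congrArg (· • v) (Eq.trans ?_ (weight_DG ..).symm))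
    rw [← zpow_natCast]
    congr 1
    ring

end Weight

section InducedModel

variable {K : Type*} [Field K] {ζ : K} {hζ0 : ζ ≠ 0} {d e n : ℕ}
  {π π' ρ : Representation K ↥(Gme2 ζ hζ0 e) (Fin 2 → K)} {α β α' β' : ℤ}

/-- `π` is the standard model of `ρ(x^α y^β)`: the first basis vector has weight `(α, β)`, the
second has weight `(β, α)`, and `τ` swaps them. -/
structure IsInducedModel (π : Representation K ↥(Gme2 ζ hζ0 e) (Fin 2 → K)) (α β : ℤ) :
    Prop where
  apply_DG : ∀ (a b : ℤ) (h : (e : ℤ) ∣ a + b) (w : Fin 2 → K),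
    π (DG ζ hζ0 e a b h) w = ![ζ ^ (α * a + β * b) * w 0, ζ ^ (α * b + β * a) * w 1]
  apply_tauG : ∀ w : Fin 2 → K, π (tauG ζ hζ0 e) w = ![w 1, w 0]

namespace IsInducedModel

theorem single_mem_weightSpace (hπ : IsInducedModel π α β) :
    Pi.single 0 1 ∈ weightSpace π (weight ζ hζ0 e α β) := by
  refine mem_weightSpace.2 fun h => ?_
  cases h using diagonalSubgroup_cases with
  | DG a b h =>
    rw [hπ.apply_DG, weight_DG]
    ext i
    fin_cases i <;> simp

theorem span_pair_eq_top (hπ : IsInducedModel π α β) :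
    Submodule.span K {Pi.single 0 1, π (tauG ζ hζ0 e) (Pi.single 0 1)} = ⊤ := by
  refine (Submodule.eq_top_iff').2 fun w => Submodule.mem_span_pair.2 ⟨w 0, w 1, ?_⟩
  rw [hπ.apply_tauG]
  ext i
  fin_cases i <;> simp

theorem isIrreducibleRep (hπ : IsInducedModel π α β)
    (hαβ : conjCharacter (tauG ζ hζ0 e) (weight ζ hζ0 e α β) ≠ weight ζ hζ0 e α β) :
    IsIrreducibleRep π :=
  isIrreducibleRep_of_span_pair_eq_top hαβ hπ.single_mem_weightSpace (by simp)
    hπ.span_pair_eq_top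

theorem weight_eq_or_eq_of_repIso (hπ : IsInducedModel π α β) (hπ' : IsInducedModel π' α' β')
    (hα' : conjCharacter (tauG ζ hζ0 e) (weight ζ hζ0 e α' β') ≠ weight ζ hζ0 e α' β')
    (h : RepIso π π') :
    weight ζ hζ0 e α β = weight ζ hζ0 e α' β' ∨ weight ζ hζ0 e α β = weight ζ hζ0 e β' α' := by
  obtain ⟨T, hT⟩ := h
  rw [← conjCharacter_tauG_weight α' β']
  exact (hπ'.isIrreducibleRep hα').eq_or_eq_conjCharacter index_diagonalSubgroup
    tauG_notMem_diagonalSubgroup hα' hπ'.single_mem_weightSpace (by simp)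
    (apply_mem_weightSpace_of_intertwines (T := T.toLinearMap) hT hπ.single_mem_weightSpace)
    (by simp)

theorem repIso_of_mem_weightSpace (hπ : IsInducedModel π α β)
    (hαβ : conjCharacter (tauG ζ hζ0 e) (weight ζ hζ0 e α β) ≠ weight ζ hζ0 e α β)
    (hρ : IsIrreducibleRep ρ) {v : Fin 2 → K} (hv : v ∈ weightSpace ρ (weight ζ hζ0 e α β))
    (hv0 : v ≠ 0) : RepIso ρ π :=
  _root_.repIso_of_mem_weightSpace index_diagonalSubgroup tauG_notMem_diagonalSubgroup hρ
    (hπ.isIrreducibleRep hαβ) hαβ hv hv0 hπ.single_mem_weightSpace (by simp)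

end IsInducedModel

theorem IsIrreducibleRep.rank_le_two_of_Gme2 {V : Type*} [AddCommGroup V] [Module K V]
    {ρ : Representation K ↥(Gme2 ζ hζ0 e) V} (hρ : IsIrreducibleRep ρ)
    (hζ : IsPrimitiveRoot ζ (d * e)) (hd : 0 < d) (he : 0 < e) : Module.rank K V ≤ 2 := by
  have := hρ.nontrivial
  obtain ⟨α, β, v, hv0, hv⟩ := exists_mem_weightSpace_weight hζ hd he ρ
  exact hρ.rank_le_two index_diagonalSubgroup hv hv0

section StandardFamily

variable {P : ℤ → ℤ → Representation K ↥(Gme2 ζ hζ0 e) (Fin 2 → K)}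

theorem conjCharacter_tauG_weight_ne_self (hζ : IsPrimitiveRoot ζ (d * e)) (he : 0 < e)
    (hn : d * e = 2 * n) (hdn : d ∣ n) {a b : ℕ} (ha0 : 0 < a) (ha : a < n) :
    conjCharacter (tauG ζ hζ0 e) (weight ζ hζ0 e (a + b) b) ≠ weight ζ hζ0 e (a + b) b := by
  rw [Ne, conjCharacter_tauG_weight_eq_self_iff hζ he hn hdn, add_sub_cancel_right,
    Int.natCast_dvd_natCast]
  exact Nat.not_dvd_of_pos_of_lt ha0 ha

theorem exists_repIso_of_isIrreducibleRep (hζ : IsPrimitiveRoot ζ (d * e)) (hd : 0 < d)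
    (he : 0 < e) (hn : d * e = 2 * n) (hdn : d ∣ n) (hP : ∀ α β, IsInducedModel (P α β) α β)
    (hρ : IsIrreducibleRep ρ) :
    ∃ a b : ℕ, 0 < a ∧ a < n ∧ b < d ∧ RepIso ρ (P (a + b) b) := by
  obtain ⟨α, β, v, hv0, hv⟩ := exists_mem_weightSpace_weight hζ hd he ρ
  have hαβ : ¬(n : ℤ) ∣ α - β := fun h => by
    have hrank := hρ.rank_le_one_of_conjCharacter_eq index_diagonalSubgroup
      tauG_notMem_diagonalSubgroup tauG_mul_self hv hv0
      ((conjCharacter_tauG_weight_eq_self_iff hζ he hn hdn).2 h)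
    simp at hrank
  obtain ⟨a, b, ha0, ha, hb, hweight⟩ := exists_weight_eq (hζ0 := hζ0) hζ hd he hn hαβ
  obtain ⟨w, hw0, hw⟩ : ∃ w ≠ 0, w ∈ weightSpace ρ (weight ζ hζ0 e (a + b) b) := by
    rcases hweight with h | h
    · exact ⟨v, hv0, h ▸ hv⟩
    · refine ⟨ρ (tauG ζ hζ0 e) v, apply_ne_zero _ hv0, ?_⟩
      rw [← h, ← conjCharacter_tauG_weight]
      exact apply_mem_weightSpace_conjCharacter _ hv
  exact ⟨a, b, ha0, ha, hb, (hP _ _).repIso_of_mem_weightSpace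
    (conjCharacter_tauG_weight_ne_self hζ he hn hdn ha0 ha) hρ hw hw0⟩

theorem eq_and_eq_of_repIso (hζ : IsPrimitiveRoot ζ (d * e)) (he : 0 < e) (hn : d * e = 2 * n)
    (hdn : d ∣ n) (hP : ∀ α β, IsInducedModel (P α β) α β) {a b a' b' : ℕ} (ha0 : 0 < a)
    (ha : a < n) (hb : b < d) (ha0' : 0 < a') (ha' : a' < n) (hb' : b' < d)
    (h : RepIso (P (a + b) b) (P (a' + b') b')) : a = a' ∧ b = b' :=
  eq_and_eq_of_weight_eq hζ he hn ha0 ha hb ha' hb'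
    ((hP _ _).weight_eq_or_eq_of_repIso (hP _ _)
      (conjCharacter_tauG_weight_ne_self hζ he hn hdn ha0' ha') h)

theorem card_quot_repIso (hζ : IsPrimitiveRoot ζ (d * e)) (hd : 0 < d) (he : 0 < e)
    (hn : d * e = 2 * n) (hdn : d ∣ n) (hP : ∀ α β, IsInducedModel (P α β) α β) :
    Nat.card (Quot fun ρ₁ ρ₂ :
      {ρ : Representation K ↥(Gme2 ζ hζ0 e) (Fin 2 → K) // IsIrreducibleRep ρ} =>
        RepIso ρ₁.1 ρ₂.1) = (n - 1) * d := by
  have hequiv : Equivalence fun ρ₁ ρ₂ :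
      {ρ : Representation K ↥(Gme2 ζ hζ0 e) (Fin 2 → K) // IsIrreducibleRep ρ} =>
        RepIso ρ₁.1 ρ₂.1 := repIso_equivalence.comap Subtype.val
  let standard (p : ↥(Finset.Ioo 0 n ×ˢ Finset.range d)) :
      {ρ : Representation K ↥(Gme2 ζ hζ0 e) (Fin 2 → K) // IsIrreducibleRep ρ} :=
    ⟨P (p.1.1 + p.1.2) p.1.2, by
      have hp := p.2
      simp only [Finset.mem_product, Finset.mem_Ioo] at hp
      exact (hP _ _).isIrreducibleRep
        (conjCharacter_tauG_weight_ne_self hζ he hn hdn hp.1.1 hp.1.2)⟩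
  rw [card_quot_eq_card_of_representatives hequiv (f := standard)]
  · rw [Nat.card_eq_fintype_card, Fintype.card_coe, Finset.card_product, Nat.card_Ioo,
      Finset.card_range, Nat.sub_zero]
  · rintro ⟨⟨a, b⟩, hp⟩ ⟨⟨a', b'⟩, hp'⟩ h
    simp only [Finset.mem_product, Finset.mem_Ioo, Finset.mem_range] at hp hp'
    obtain ⟨rfl, rfl⟩ := eq_and_eq_of_repIso hζ he hn hdn hP hp.1.1 hp.1.2 hp.2 hp'.1.1 hp'.1.2
      hp'.2 h
    rfl
  · rintro ⟨ρ, hρ⟩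
    obtain ⟨a, b, ha0, ha, hb, h⟩ := exists_repIso_of_isIrreducibleRep hζ hd he hn hdn hP hρ
    exact ⟨⟨(a, b), by simp [ha0, ha, hb]⟩, h⟩

end StandardFamily

end InducedModel

section Characters

variable {K : Type*} [Field K] {ζ : K} {hζ0 : ζ ≠ 0} {d e n : ℕ}
  {χxy χA χNp : ↥(Gme2 ζ hζ0 e) →* Kˣ}

theorem apply_tauG_sq {A : Type*} [Monoid A] (χ : ↥(Gme2 ζ hζ0 e) →* A) :
    χ (tauG ζ hζ0 e) ^ 2 = 1 := by
  rw [← map_pow, sq, tauG_mul_self, map_one]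

theorem apply_tauG_mul_mul_tauG {A : Type*} [CommMonoid A] (χ : ↥(Gme2 ζ hζ0 e) →* A)
    (g : ↥(Gme2 ζ hζ0 e)) : χ (tauG ζ hζ0 e * g * tauG ζ hζ0 e) = χ g := by
  rw [map_mul, map_mul, mul_right_comm, ← sq, apply_tauG_sq, one_mul]

theorem apply_dihedralRotation_sq {A : Type*} [CommMonoid A] (χ : ↥(Gme2 ζ hζ0 e) →* A) :
    χ (dihedralRotation ζ hζ0 e) ^ 2 = 1 := by
  rw [sq]
  nth_rewrite 1 [← apply_tauG_mul_mul_tauG]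
  rw [← map_mul, tauG_conj_dihedralRotation, inv_mul_cancel, map_one]

theorem apply_diagonalReflection_pow {A : Type*} [Monoid A] (hζ : ζ ^ (d * e) = 1)
    (χ : ↥(Gme2 ζ hζ0 e) →* A) : χ (diagonalReflection ζ hζ0 e) ^ d = 1 := by
  rw [← map_pow, diagonalReflection_pow_eq_one hζ, map_one]

theorem apply_diagonalReflection_eq_one
    (hχNpD : ∀ (a b : ℤ) (h : (e : ℤ) ∣ a + b),
      ((χNp (DG ζ hζ0 e a b h) : Kˣ) : K) = ζ ^ ((n : ℤ) * a)) :
    χNp (diagonalReflection ζ hζ0 e) = 1 := by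
  rw [diagonalReflection, ← apply_tauG_mul_mul_tauG, tauG_conj_DG]
  exact Units.ext (by simp [hχNpD])

theorem dvd_of_apply_DG (hζ : IsPrimitiveRoot ζ (d * e)) (hn : d * e = 2 * n) (hn0 : 0 < n)
    (hχNpD : ∀ (a b : ℤ) (h : (e : ℤ) ∣ a + b),
      ((χNp (DG ζ hζ0 e a b h) : Kˣ) : K) = ζ ^ ((n : ℤ) * a)) : d ∣ n := by
  have hone : ζ ^ ((n * e : ℕ) : ℤ) = 1 := by
    have := congrArg Units.val (apply_diagonalReflection_eq_one hχNpD)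
    rwa [diagonalReflection, hχNpD, ← Nat.cast_mul] at this
  obtain ⟨k, rfl⟩ : 2 ∣ e := by
    rw [hζ.zpow_eq_one_iff_dvd, Int.natCast_dvd_natCast, hn, mul_comm] at hone
    exact Nat.dvd_of_mul_dvd_mul_left hn0 hone
  exact ⟨k, by lia⟩

theorem isDualCharacterSystem_Gme2 (hζ : IsPrimitiveRoot ζ (d * e)) (hn : d * e = 2 * n)
    (hn0 : 0 < n)
    (hχxyD : ∀ (a b : ℤ) (h : (e : ℤ) ∣ a + b),
      ((χxy (DG ζ hζ0 e a b h) : Kˣ) : K) = ζ ^ (a + b))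
    (hχxyτ : χxy (tauG ζ hζ0 e) = 1)
    (hχAD : ∀ (a b : ℤ) (h : (e : ℤ) ∣ a + b), χA (DG ζ hζ0 e a b h) = 1)
    (hχAτ : ((χA (tauG ζ hζ0 e) : Kˣ) : K) = -1)
    (hχNpD : ∀ (a b : ℤ) (h : (e : ℤ) ∣ a + b),
      ((χNp (DG ζ hζ0 e a b h) : Kˣ) : K) = ζ ^ ((n : ℤ) * a))
    (hχNpτ : χNp (tauG ζ hζ0 e) = 1) :
    IsDualCharacterSystem ![χxy, χA, χNp]
      ![diagonalReflection ζ hζ0 e, tauG ζ hζ0 e, dihedralRotation ζ hζ0 e] ![d, 2, 2] where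
  closure_eq_top := by
    rw [Matrix.range_cons, Matrix.range_cons_cons_empty]
    exact closure_diagonalReflection_tauG_dihedralRotation_eq_top
  apply_eq_one i j hij := by
    fin_cases i <;> fin_cases j <;> try exact absurd rfl hij
    · exact hχxyτ
    · exact Units.ext (by simp [dihedralRotation, hχxyD])
    · exact hχAD e 0 (by simp)
    · exact hχAD 1 (-1) (by simp)
    · exact apply_diagonalReflection_eq_one hχNpD
    · exact hχNpτ
  isPrimitiveRoot i := by
    have hζn : IsPrimitiveRoot (ζ ^ n) 2 := hζ.pow (by lia) (by lia)
    rw [← IsPrimitiveRoot.coe_units_iff]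
    fin_cases i
    · simpa [diagonalReflection, hχxyD] using hζ.pow (by lia) (mul_comm d e)
    · simpa [hχAτ, hζn.eq_neg_one_of_two_right] using hζn
    · simpa [dihedralRotation, hχNpD] using hζn
  apply_pow_eq_one ψ i := by
    fin_cases i
    · exact apply_diagonalReflection_pow hζ.pow_eq_one ψ
    · exact apply_tauG_sq ψ
    · exact apply_dihedralRotation_sq ψ

end Characters

theorem irreducibles_Gme2_even_general
    {K : Type*} [Field K] (m d e n : ℕ) (hd : 0 < d) (he : 0 < e)
    (hm : m = d * e) (hn : m = 2 * n)
    (ζ : K) (hζ : IsPrimitiveRoot ζ m) (hζ0 : ζ ≠ 0)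
    (χxy χA χNp : ↥(Gme2 ζ hζ0 e) →* Kˣ)
    (hχxyD : ∀ (a b : ℤ) (h : (e : ℤ) ∣ a + b),
      ((χxy (DG ζ hζ0 e a b h) : Kˣ) : K) = ζ ^ (a + b))
    (hχxyτ : χxy (tauG ζ hζ0 e) = 1)
    (hχAD : ∀ (a b : ℤ) (h : (e : ℤ) ∣ a + b), χA (DG ζ hζ0 e a b h) = 1)
    (hχAτ : ((χA (tauG ζ hζ0 e) : Kˣ) : K) = -1)
    (hχNpD : ∀ (a b : ℤ) (h : (e : ℤ) ∣ a + b),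
      ((χNp (DG ζ hζ0 e a b h) : Kˣ) : K) = ζ ^ ((n : ℤ) * a))
    (hχNpτ : χNp (tauG ζ hζ0 e) = 1)
    (P : ℤ → ℤ → Representation K ↥(Gme2 ζ hζ0 e) (Fin 2 → K))
    (hPD : ∀ (α β a' b' : ℤ) (h : (e : ℤ) ∣ a' + b') (w : Fin 2 → K),
      P α β (DG ζ hζ0 e a' b' h) w =
        ![ζ ^ (α * a' + β * b') * w 0, ζ ^ (α * b' + β * a') * w 1])
    (hPτ : ∀ (α β : ℤ) (w : Fin 2 → K), P α β (tauG ζ hζ0 e) w = ![w 1, w 0]) :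
    orderOf χxy = d ∧
    orderOf χA = 2 ∧
    orderOf χNp = 2 ∧
    (∀ χ : ↥(Gme2 ζ hζ0 e) →* Kˣ, ∃ i j k : ℕ, χ = χxy ^ i * χA ^ j * χNp ^ k) ∧
    Nat.card (↥(Gme2 ζ hζ0 e) →* Kˣ) = 4 * d ∧
    (∀ a b : ℕ, 0 < a → a < n → b < d →
      IsIrreducibleRep (P ((a : ℤ) + b) (b : ℤ))) ∧
    (∀ a b a' b' : ℕ, 0 < a → a < n → b < d → 0 < a' → a' < n → b' < d →
      RepIso (P ((a : ℤ) + b) (b : ℤ)) (P ((a' : ℤ) + b') (b' : ℤ)) → a = a' ∧ b = b') ∧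
    (∀ ρ : Representation K ↥(Gme2 ζ hζ0 e) (Fin 2 → K), IsIrreducibleRep ρ →
      ∃ a b : ℕ, 0 < a ∧ a < n ∧ b < d ∧ RepIso ρ (P ((a : ℤ) + b) (b : ℤ))) ∧
    Nat.card (Quot (fun ρ₁ ρ₂ :
        {ρ : Representation K ↥(Gme2 ζ hζ0 e) (Fin 2 → K) // IsIrreducibleRep ρ} =>
          RepIso ρ₁.1 ρ₂.1)) = (n - 1) * d ∧
    (∀ (V : Type*) [AddCommGroup V] [Module K V]
        (ρ : Representation K ↥(Gme2 ζ hζ0 e) V),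
      IsIrreducibleRep ρ → Module.rank K V ≤ 2) := by
  subst hm
  have hn0 : 0 < n := Nat.pos_of_mul_pos_left (hn ▸ Nat.mul_pos hd he)
  have hdn : d ∣ n := dvd_of_apply_DG hζ hn hn0 hχNpD
  have : NeZero d := ⟨hd.ne'⟩
  have : ∀ i, NeZero (![d, 2, 2] i) := by
    simp [Fin.forall_fin_succ, this, Nat.instNeZeroSucc]
  have hχ := isDualCharacterSystem_Gme2 hζ hn hn0 hχxyD hχxyτ hχAD hχAτ hχNpD hχNpτ
  have hP (α β : ℤ) : IsInducedModel (P α β) α β := ⟨hPD α β, hPτ α β⟩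
  refine ⟨hχ.orderOf_eq 0, hχ.orderOf_eq 1, hχ.orderOf_eq 2, fun ψ => ?_, ?_,
    fun a b ha0 ha _ => (hP _ _).isIrreducibleRep
      (conjCharacter_tauG_weight_ne_self hζ he hn hdn ha0 ha),
    fun a b a' b' => eq_and_eq_of_repIso hζ he hn hdn hP,
    fun _ => exists_repIso_of_isIrreducibleRep hζ hd he hn hdn hP,
    card_quot_repIso hζ hd he hn hdn hP, fun V _ _ ρ hρ => hρ.rank_le_two_of_Gme2 hζ hd he⟩
  · obtain ⟨a, ha⟩ := hχ.exists_eq_prod_pow ψ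
    exact ⟨a 0, a 1, a 2, by simpa [Fin.prod_univ_three] using ha⟩
  · rw [hχ.card_eq_prod, Fin.prod_univ_three]
    change d * 2 * 2 = 4 * d
    ring

/-!
STATEMENT 13: the irreducible representations of `G = G(m,e,2)` for `e` even, `n = m/2`.
`G` has exactly `4d` one-dimensional representations: its character group is generated by
`χ(xy)` (order `d`) and `χ(A)`, `χ(N⁺)` (order `2`), so has order `4d`.  Moreover `G` has
exactly `(n-1)d` isomorphism classes of `2`-dimensional irreducible representations,
represented (uniquely) by `ρ(x^a (xy)^b) = ρ(x^{a+b} y^b)` with `0 < a < n`, `0 ≤ b < d`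
(the family `P` is the standard induced model of these), and there are no irreducibles of
dimension greater than `2`.  Here `χ(xy) : D(a,b) ↦ ζ^{a+b}, τ ↦ 1`;
`χ(A) : D(a,b) ↦ 1, τ ↦ -1`; `χ(N⁺) : D(a,b) ↦ ζ^{na}, τ ↦ 1`.
-/
theorem irreducibles_Gme2_even
    {K : Type*} [Field K] [CharZero K] (m d e n : ℕ) (hd : 0 < d) (he : 0 < e)
    (hm : m = d * e) (hn : m = 2 * n)
    (ζ : K) (hζ : IsPrimitiveRoot ζ m) (hζ0 : ζ ≠ 0)
    (χxy χA χNp : ↥(Gme2 ζ hζ0 e) →* Kˣ)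
    (hχxyD : ∀ (a b : ℤ) (h : (e : ℤ) ∣ a + b),
      ((χxy (DG ζ hζ0 e a b h) : Kˣ) : K) = ζ ^ (a + b))
    (hχxyτ : χxy (tauG ζ hζ0 e) = 1)
    (hχAD : ∀ (a b : ℤ) (h : (e : ℤ) ∣ a + b), χA (DG ζ hζ0 e a b h) = 1)
    (hχAτ : ((χA (tauG ζ hζ0 e) : Kˣ) : K) = -1)
    (hχNpD : ∀ (a b : ℤ) (h : (e : ℤ) ∣ a + b),
      ((χNp (DG ζ hζ0 e a b h) : Kˣ) : K) = ζ ^ ((n : ℤ) * a))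
    (hχNpτ : χNp (tauG ζ hζ0 e) = 1)
    -- the standard model `P α β` of `ρ(x^α y^β) = Ind_H^G χ_H(x^α y^β)`
    (P : ℤ → ℤ → Representation K ↥(Gme2 ζ hζ0 e) (Fin 2 → K))
    (hPD : ∀ (α β a' b' : ℤ) (h : (e : ℤ) ∣ a' + b') (w : Fin 2 → K),
      P α β (DG ζ hζ0 e a' b' h) w =
        ![ζ ^ (α * a' + β * b') * w 0, ζ ^ (α * b' + β * a') * w 1])
    (hPτ : ∀ (α β : ℤ) (w : Fin 2 → K), P α β (tauG ζ hζ0 e) w = ![w 1, w 0]) :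
    orderOf χxy = d ∧
    orderOf χA = 2 ∧
    orderOf χNp = 2 ∧
    (∀ χ : ↥(Gme2 ζ hζ0 e) →* Kˣ, ∃ i j k : ℕ, χ = χxy ^ i * χA ^ j * χNp ^ k) ∧
    Nat.card (↥(Gme2 ζ hζ0 e) →* Kˣ) = 4 * d ∧
    -- the representatives `ρ(x^a (xy)^b)`, `0 < a < n`, `0 ≤ b < d`, are irreducible,
    (∀ a b : ℕ, 0 < a → a < n → b < d →
      IsIrreducibleRep (P ((a : ℤ) + b) (b : ℤ))) ∧
    -- pairwise non-isomorphic,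
    (∀ a b a' b' : ℕ, 0 < a → a < n → b < d → 0 < a' → a' < n → b' < d →
      RepIso (P ((a : ℤ) + b) (b : ℤ)) (P ((a' : ℤ) + b') (b' : ℤ)) → a = a' ∧ b = b') ∧
    -- and exhaust the `2`-dimensional irreducibles,
    (∀ ρ : Representation K ↥(Gme2 ζ hζ0 e) (Fin 2 → K), IsIrreducibleRep ρ →
      ∃ a b : ℕ, 0 < a ∧ a < n ∧ b < d ∧ RepIso ρ (P ((a : ℤ) + b) (b : ℤ))) ∧
    -- so there are exactly `(n-1)d` isomorphism classes of `2`-dimensional irreducibles,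
    Nat.card (Quot (fun ρ₁ ρ₂ :
        {ρ : Representation K ↥(Gme2 ζ hζ0 e) (Fin 2 → K) // IsIrreducibleRep ρ} =>
          RepIso ρ₁.1 ρ₂.1)) = (n - 1) * d ∧
    -- and no irreducible representations of dimension greater than `2`.
    (∀ (V : Type) [AddCommGroup V] [Module K V] [FiniteDimensional K V]
        (ρ : Representation K ↥(Gme2 ζ hζ0 e) V),
      IsIrreducibleRep ρ → Module.finrank K V ≤ 2) := by
  obtain ⟨hxy, hA, hNp, hgen, hcard, hirr, hinj, hexh, hcard₂, hrank⟩ :=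
    irreducibles_Gme2_even_general m d e n hd he hm hn ζ hζ hζ0 χxy χA χNp hχxyD hχxyτ hχAD
      hχAτ hχNpD hχNpτ P hPD hPτ
  exact ⟨hxy, hA, hNp, hgen, hcard, hirr, hinj, hexh, hcard₂,
    fun V _ _ _ ρ hρ => Module.finrank_le_of_rank_le (hrank V ρ hρ)⟩
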